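/- (Bailey's ₃ψ₃ summation formula.) Let q, σ, ρ, γ ∈ ℂ with 0 < |q| < 1 and |q| < |σργ|, and assume none of σ, ρ, γ, σργ equals q^m for any integer m. Then the bilateral series converges absolutely and ∑_{k=−∞}^{∞} (q/(σργ))^k · (σ;q)_k (ρ;q)_k (γ;q)_k / ((q/σ;q)_k (q/ρ;q)_k (q/γ;q)_k) = (q;q)_∞ (q/(σρ);q)_∞ (q/(σγ);q)_∞ (q/(ργ);q)_∞ / ((q/σ;q)_∞ (q/ρ;q)_∞ (q/γ;q)_∞ (q/(σργ);q)_∞). -/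

import Mathlib

/-- The finite q-Pochhammer symbol `(a;q)_k = ∏_{i=0}^{k-1} (1 - a qⁱ)`. -/
noncomputable def qPoch (a q : ℂ) (k : ℕ) : ℂ :=
  ∏ i ∈ Finset.range k, (1 - a * q ^ i)

/-- The infinite q-Pochhammer symbol `(a;q)_∞ = ∏_{i=0}^{∞} (1 - a qⁱ)`. -/
noncomputable def qPochInf (a q : ℂ) : ℂ :=
  ∏' i : ℕ, (1 - a * q ^ i)

/-- The q-Pochhammer symbol extended to an arbitrary integer index:
`(a;q)_k = (a;q)_∞ / (a q^k;q)_∞`. -/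
noncomputable def qPochInt (a q : ℂ) (k : ℤ) : ℂ :=
  qPochInf a q / qPochInf (a * q ^ k) q

/-!
The term of index `-n` of the series is `qⁿ` times the term of index `n`, so the bilateral series
folds into a series over `n ≥ 0`. In the reciprocal parameters `x = 1/σ`, `y = 1/ρ`, `z = 1/γ`, let
`S(x, y, z)` be its sum: it is symmetric, makes sense also when a parameter is `0`, and telescoping
gives the contiguous relation

  `(1 - q x) (1 - q x y z) S(x, y, z) = (1 - q x y) (1 - q x z) S(q x, y, z)`.

Iterating it drives `x` to `0`, which expresses `S(x, y, z)` by `S(0, y, z)`, and by symmetry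
`S(0, y, z)` by `S(0, 0, z)`. For `x = 1` the series reduces to its first term, so `S(1, 0, z) = 1`,
and the same relation between `S(1, 0, z)` and `S(0, 0, z)` evaluates the latter.
-/

open Filter Finset Topology

section QPochhammer

variable {a q : ℂ}

lemma qPoch_succ (a q : ℂ) (n : ℕ) : qPoch a q (n + 1) = qPoch a q n * (1 - a * q ^ n) :=
  prod_range_succ ..

lemma qPoch_add (a q : ℂ) (m n : ℕ) :
    qPoch a q (m + n) = qPoch a q m * qPoch (a * q ^ m) q n := by
  simp [qPoch, prod_range_add, pow_add, mul_assoc]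

lemma qPoch_ne_zero (ha : ∀ i : ℕ, a * q ^ i ≠ 1) (n : ℕ) : qPoch a q n ≠ 0 :=
  prod_ne_zero_iff.2 fun i _ ↦ sub_ne_zero.2 (ha i).symm

lemma qPochInf_zero_left (q : ℂ) : qPochInf 0 q = 1 := by simp [qPochInf]

lemma summable_norm_neg_mul_pow {K : Type*} [NormedField K] (a : K) {q : K} (hq : ‖q‖ < 1) :
    Summable fun i : ℕ ↦ ‖-(a * q ^ i)‖ := by
  simpa only [norm_neg, norm_mul, norm_pow] using
    (summable_geometric_of_lt_one (norm_nonneg q) hq).mul_left ‖a‖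

lemma tendsto_qPoch_atTop (a : ℂ) (hq : ‖q‖ < 1) :
    Tendsto (qPoch a q) atTop (𝓝 (qPochInf a q)) := by
  unfold qPoch qPochInf
  simpa only [← sub_eq_add_neg] using
    (multipliable_one_add_of_summable (summable_norm_neg_mul_pow a hq)).hasProd.tendsto_prod_nat

lemma qPochInf_ne_zero (hq : ‖q‖ < 1) (ha : ∀ i : ℕ, a * q ^ i ≠ 1) : qPochInf a q ≠ 0 := by
  have hfactor (i : ℕ) : 1 + -(a * q ^ i) ≠ 0 := by
    simpa only [← sub_eq_add_neg] using sub_ne_zero.2 (ha i).symm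
  simpa only [qPochInf, sub_eq_add_neg] using
    tprod_one_add_ne_zero_of_summable hfactor (summable_norm_neg_mul_pow a hq)

lemma qPoch_mul_qPochInf_mul_pow (a : ℂ) (hq : ‖q‖ < 1) (m : ℕ) :
    qPoch a q m * qPochInf (a * q ^ m) q = qPochInf a q := by
  refine tendsto_nhds_unique ((tendsto_qPoch_atTop (a * q ^ m) hq).const_mul (qPoch a q m)) ?_
  simpa only [add_comm _ m, qPoch_add] using
    (tendsto_add_atTop_iff_nat m).2 (tendsto_qPoch_atTop a hq)

lemma exists_norm_inv_qPoch_mul_pow_le (hq : ‖q‖ < 1) (ha : ∀ i : ℕ, a * q ^ i ≠ 1) :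
    ∃ C : ℝ, ∀ N n : ℕ, ‖(qPoch (a * q ^ N) q n)⁻¹‖ ≤ C := by
  have hlim := tendsto_qPoch_atTop a hq
  obtain ⟨M, hM⟩ := hlim.norm.bddAbove_range
  obtain ⟨M', hM'⟩ := (hlim.inv₀ (qPochInf_ne_zero hq ha)).norm.bddAbove_range
  rw [mem_upperBounds, Set.forall_mem_range] at hM hM'
  refine ⟨M * M', fun N n ↦ ?_⟩
  have hsplit : (qPoch (a * q ^ N) q n)⁻¹ = qPoch a q N * (qPoch a q (N + n))⁻¹ := by
    rw [qPoch_add, mul_inv, mul_inv_cancel_left₀ (qPoch_ne_zero ha N)]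
  rw [hsplit, norm_mul]
  exact mul_le_mul (hM N) (hM' _) (norm_nonneg _) ((norm_nonneg _).trans (hM N))

lemma qPochInt_natCast (hq : ‖q‖ < 1) (ha : ∀ i : ℕ, a * q ^ i ≠ 1) (n : ℕ) :
    qPochInt a q n = qPoch a q n := by
  have hsplit := qPoch_mul_qPochInf_mul_pow a hq n
  have hne : qPochInf (a * q ^ n) q ≠ 0 :=
    right_ne_zero_of_mul (hsplit.trans_ne (qPochInf_ne_zero hq ha))
  rw [qPochInt, zpow_natCast, div_eq_iff hne, hsplit]

lemma qPoch_div_pow (hq : q ≠ 0) (ha : a ≠ 0) (n : ℕ) :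
    qPoch (a / q ^ n) q n = (-a / q) ^ n / q ^ n.choose 2 * qPoch (q / a) q n := by
  induction n with
  | zero => simp [qPoch]
  | succ n ih =>
    have hshift : a / q ^ (n + 1) * q ^ 1 = a / q ^ n := by
      rw [pow_one, pow_succ]
      field_simp
    have hone (b : ℂ) : qPoch b q 1 = 1 - b := by simp [qPoch]
    rw [add_comm n 1, qPoch_add, add_comm 1 n, hshift, ih, hone, qPoch_succ, pow_succ (-a / q),
      Nat.choose_succ_succ' n 1, Nat.choose_one_right]
    generalize (-a / q) ^ n = P
    field_simp
    ring

lemma qPochInt_neg_natCast (hq0 : q ≠ 0) (hq : ‖q‖ < 1) (ha : ∀ i : ℕ, a * q ^ i ≠ 1) (n : ℕ) :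
    qPochInt a q (-n) = (qPoch (a / q ^ n) q n)⁻¹ := by
  have hsplit := qPoch_mul_qPochInf_mul_pow (a / q ^ n) hq n
  rw [div_mul_cancel₀ a (pow_ne_zero n hq0)] at hsplit
  rw [qPochInt, zpow_neg, zpow_natCast, ← div_eq_mul_inv, ← hsplit, mul_comm,
    div_mul_cancel_left₀ (qPochInf_ne_zero hq ha)]

lemma qPochInt_neg_div_qPochInt_neg (hq0 : q ≠ 0) (hq : ‖q‖ < 1) (ha0 : a ≠ 0)
    (ha : ∀ i : ℕ, a * q ^ i ≠ 1) (ha' : ∀ i : ℕ, q / a * q ^ i ≠ 1) (n : ℕ) :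
    qPochInt a q (-n) / qPochInt (q / a) q (-n) =
      (q / a ^ 2) ^ n * (qPochInt a q n / qPochInt (q / a) q n) := by
  have hne := qPoch_ne_zero ha n
  have hne' := qPoch_ne_zero ha' n
  rw [qPochInt_neg_natCast hq0 hq ha, qPochInt_neg_natCast hq0 hq ha', qPochInt_natCast hq ha,
    qPochInt_natCast hq ha', qPoch_div_pow hq0 ha0, qPoch_div_pow hq0 (div_ne_zero hq0 ha0),
    div_div_cancel₀ hq0]
  simp only [neg_div, neg_pow (a / q), neg_pow (q / a / q), div_pow, pow_right_comm a 2 n]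
  field_simp

end QPochhammer

section WellPoised

variable {K : Type*} [Field K]

/-- The factor `xⁿ (1/x;q)_n / (qx;q)_n` of a well-poised series, with the powers of `x` absorbed
into the product so that the value `x = 0` is allowed. -/
def wellPoisedFactor (q x : K) (n : ℕ) : K :=
  ∏ i ∈ range n, (x - q ^ i) / (1 - q * x * q ^ i)

/-- The term of index `n ≥ 0` of Bailey's bilateral series, in the reciprocal parameters
`x = 1/σ`, `y = 1/ρ`, `z = 1/γ`. -/
def wellPoisedTerm (q x y z : K) (n : ℕ) : K :=
  wellPoisedFactor q x n * wellPoisedFactor q y n * wellPoisedFactor q z n * q ^ n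

/-- The sum of the terms of index `n` and `-n` of Bailey's bilateral series, the term of index `0`
being counted once: the term of index `-n` is `qⁿ` times that of index `n`. -/
def foldedTerm (q x y z : K) (n : ℕ) : K :=
  (if n = 0 then 1 else 1 + q ^ n) * wellPoisedTerm q x y z n

variable {q x y z : K}

lemma wellPoisedFactor_succ (q x : K) (n : ℕ) :
    wellPoisedFactor q x (n + 1) =
      wellPoisedFactor q x n * ((x - q ^ n) / (1 - q * x * q ^ n)) :=
  prod_range_succ ..

lemma foldedTerm_zero (q x y z : K) : foldedTerm q x y z 0 = wellPoisedTerm q x y z 0 := by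
  simp [foldedTerm]

lemma foldedTerm_succ (q x y z : K) (n : ℕ) :
    foldedTerm q x y z (n + 1) = (1 + q ^ (n + 1)) * wellPoisedTerm q x y z (n + 1) := by
  simp [foldedTerm]

lemma foldedTerm_left_comm (q x y z : K) : foldedTerm q x y z = foldedTerm q y x z := by
  funext n
  simp only [foldedTerm, wellPoisedTerm, mul_comm (wellPoisedFactor q x n)]

lemma foldedTerm_one_of_ne_zero (q y z : K) {n : ℕ} (hn : n ≠ 0) : foldedTerm q 1 y z n = 0 := by
  have hfactor : wellPoisedFactor q 1 n = 0 :=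
    prod_eq_zero (mem_range.2 (Nat.pos_of_ne_zero hn)) (by simp)
  simp [foldedTerm, wellPoisedTerm, hfactor]

lemma mul_mul_pow_mul_pow_ne_one (hx : ∀ i : ℕ, q * x * q ^ i ≠ 1) (N i : ℕ) :
    q * (x * q ^ N) * q ^ i ≠ 1 := by
  simpa only [pow_add, mul_assoc] using hx (N + i)

lemma wellPoisedFactor_mul_succ (hx : ∀ i : ℕ, q * x * q ^ i ≠ 1) (n : ℕ) :
    wellPoisedFactor q (x * q) (n + 1) =
      -q ^ n * (1 - q * x) ^ 2 * wellPoisedFactor q x n /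
        ((1 - q * x * q ^ n) * (1 - q * x * q ^ (n + 1))) := by
  have hne (i : ℕ) : 1 - q * x * q ^ i ≠ 0 := sub_ne_zero.2 (hx i).symm
  have hshift (i : ℕ) : 1 - q * (x * q) * q ^ i = 1 - q * x * q ^ (i + 1) := by ring
  induction n with
  | zero =>
    rw [wellPoisedFactor_succ, hshift]
    simp only [wellPoisedFactor, prod_range_zero]
    field_simp [hne]
    ring
  | succ n ih =>
    rw [wellPoisedFactor_succ, ih, wellPoisedFactor_succ, hshift]
    field_simp [hne]
    ring

/- The right-hand side is the Gosper certificate of the contiguous relation for `x ↦ q x`. -/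
lemma sum_range_succ_foldedTerm_sub (hx : ∀ i : ℕ, q * x * q ^ i ≠ 1)
    (hy : ∀ i : ℕ, q * y * q ^ i ≠ 1) (hz : ∀ i : ℕ, q * z * q ^ i ≠ 1) (n : ℕ) :
    ∑ k ∈ range (n + 1), ((1 - q * x) * (1 - q * x * y * z) * foldedTerm q x y z k -
        (1 - q * x * y) * (1 - q * x * z) * foldedTerm q (x * q) y z k) =
      -(q * x * (1 - q * x)) * wellPoisedTerm q x y z n *
        ((y - q ^ n) * (z - q ^ n) / (1 - q * x * q ^ n)) := by
  have hxn (i : ℕ) : 1 - q * x * q ^ i ≠ 0 := sub_ne_zero.2 (hx i).symm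
  induction n with
  | zero =>
    have h0 : 1 - q * x ≠ 0 := by simpa using hxn 0
    simp only [zero_add, sum_range_one, foldedTerm_zero, wellPoisedTerm, wellPoisedFactor,
      prod_range_zero, pow_zero, mul_one]
    field_simp
    ring
  | succ n ih =>
    have hx0 := hxn n
    have hx1 := hxn (n + 1)
    have hyn : 1 - q * y * q ^ n ≠ 0 := sub_ne_zero.2 (hy n).symm
    have hzn : 1 - q * z * q ^ n ≠ 0 := sub_ne_zero.2 (hz n).symm
    rw [sum_range_succ, ih]
    simp only [foldedTerm_succ, wellPoisedTerm, wellPoisedFactor_mul_succ hx,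
      wellPoisedFactor_succ]
    generalize wellPoisedFactor q x n = X, wellPoisedFactor q y n = Y, wellPoisedFactor q z n = Z
    generalize 1 - q * x * q ^ n = A at *
    generalize hA' : 1 - q * x * q ^ (n + 1) = A' at *
    generalize hB : 1 - q * y * q ^ n = B at *
    generalize hC : 1 - q * z * q ^ n = C at *
    field_simp
    rw [← hA', ← hB, ← hC]
    ring

end WellPoised

section Convergence

lemma summable_prod_add_pow {r s t u : ℝ} (hr : 0 ≤ r) (hr1 : r < 1) (hs : 0 ≤ s) (ht : 0 ≤ t)
    (hu : 0 ≤ u) (h : r * s * t * u < 1) :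
    Summable fun n ↦ (∏ i ∈ range n, (s + r ^ i)) * (∏ i ∈ range n, (t + r ^ i)) *
      (∏ i ∈ range n, (u + r ^ i)) * r ^ n := by
  have hpow : Tendsto (r ^ · : ℕ → ℝ) atTop (𝓝 0) := tendsto_pow_atTop_nhds_zero_of_lt_one hr hr1
  have hratio : Tendsto (fun n ↦ (s + r ^ n) * (t + r ^ n) * (u + r ^ n) * r) atTop
      (𝓝 (r * s * t * u)) := by
    convert (((hpow.const_add s).mul (hpow.const_add t)).mul (hpow.const_add u)).mul_const r using 2
    ring
  obtain ⟨l, hl, hl1⟩ := exists_between h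
  refine summable_of_ratio_norm_eventually_le hl1 ?_
  filter_upwards [hratio.eventually_le_const hl] with n hn
  rw [Real.norm_of_nonneg (by positivity), Real.norm_of_nonneg (by positivity)]
  refine (le_of_eq ?_).trans (mul_le_mul_of_nonneg_right hn (by positivity))
  simp only [prod_range_succ]
  ring

variable {q x y z : ℂ}

lemma wellPoisedFactor_eq_mul_inv_qPoch (q x : ℂ) (n : ℕ) :
    wellPoisedFactor q x n = (∏ i ∈ range n, (x - q ^ i)) * (qPoch (q * x) q n)⁻¹ := by
  rw [wellPoisedFactor, prod_div_distrib, qPoch, div_eq_mul_inv]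

lemma exists_norm_wellPoisedFactor_mul_pow_le (hq : ‖q‖ < 1) (hx : ∀ i : ℕ, q * x * q ^ i ≠ 1) :
    ∃ C : ℝ, ∀ N n : ℕ,
      ‖wellPoisedFactor q (x * q ^ N) n‖ ≤ C * ∏ i ∈ range n, (‖x‖ + ‖q‖ ^ i) := by
  obtain ⟨C, hC⟩ := exists_norm_inv_qPoch_mul_pow_le hq hx
  refine ⟨C, fun N n ↦ ?_⟩
  rw [wellPoisedFactor_eq_mul_inv_qPoch, norm_mul, norm_prod, ← mul_assoc, mul_comm C]
  refine mul_le_mul (prod_le_prod (fun _ _ ↦ norm_nonneg _) fun i _ ↦ ?_) (hC N n)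
    (norm_nonneg _) (by positivity)
  calc ‖x * q ^ N - q ^ i‖ ≤ ‖x‖ * ‖q‖ ^ N + ‖q‖ ^ i := by
        simpa only [norm_mul, norm_pow] using norm_sub_le (x * q ^ N) (q ^ i)
    _ ≤ ‖x‖ + ‖q‖ ^ i := by
        gcongr
        exact mul_le_of_le_one_right (norm_nonneg x) (pow_le_one₀ (norm_nonneg q) hq.le)

lemma exists_summable_norm_wellPoisedTerm_mul_pow_le (hq : ‖q‖ < 1) (hxyz : ‖q * x * y * z‖ < 1)
    (hx : ∀ i : ℕ, q * x * q ^ i ≠ 1) (hy : ∀ i : ℕ, q * y * q ^ i ≠ 1)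
    (hz : ∀ i : ℕ, q * z * q ^ i ≠ 1) :
    ∃ b : ℕ → ℝ, Summable b ∧ ∀ N n : ℕ, ‖wellPoisedTerm q (x * q ^ N) y z n‖ ≤ b n := by
  obtain ⟨C₁, h₁⟩ := exists_norm_wellPoisedFactor_mul_pow_le hq hx
  obtain ⟨C₂, h₂⟩ := exists_norm_wellPoisedFactor_mul_pow_le hq hy
  obtain ⟨C₃, h₃⟩ := exists_norm_wellPoisedFactor_mul_pow_le hq hz
  refine ⟨_, (summable_prod_add_pow (norm_nonneg q) hq (norm_nonneg x) (norm_nonneg y)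
    (norm_nonneg z) (by simpa only [norm_mul] using hxyz)).mul_left (C₁ * C₂ * C₃), fun N n ↦ ?_⟩
  have h₁ := h₁ N n
  have h₂ := h₂ 0 n
  have h₃ := h₃ 0 n
  rw [pow_zero, mul_one] at h₂ h₃
  rw [wellPoisedTerm, norm_mul, norm_mul, norm_mul, norm_pow]
  calc _ ≤ (C₁ * ∏ i ∈ range n, (‖x‖ + ‖q‖ ^ i)) * (C₂ * ∏ i ∈ range n, (‖y‖ + ‖q‖ ^ i)) *
        (C₃ * ∏ i ∈ range n, (‖z‖ + ‖q‖ ^ i)) * ‖q‖ ^ n := by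
        have := (norm_nonneg _).trans h₁
        have := (norm_nonneg _).trans h₂
        gcongr
    _ = _ := by ring

lemma norm_foldedTerm_le (hq : ‖q‖ ≤ 1) (n : ℕ) :
    ‖foldedTerm q x y z n‖ ≤ 2 * ‖wellPoisedTerm q x y z n‖ := by
  rw [foldedTerm, norm_mul]
  gcongr
  split_ifs
  · simp
  · calc ‖1 + q ^ n‖ ≤ 1 + ‖q‖ ^ n := by simpa using norm_add_le 1 (q ^ n)
      _ ≤ 2 := by linarith [pow_le_one₀ (n := n) (norm_nonneg q) hq]

lemma summable_wellPoisedTerm (hq : ‖q‖ < 1) (hxyz : ‖q * x * y * z‖ < 1)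
    (hx : ∀ i : ℕ, q * x * q ^ i ≠ 1) (hy : ∀ i : ℕ, q * y * q ^ i ≠ 1)
    (hz : ∀ i : ℕ, q * z * q ^ i ≠ 1) : Summable (wellPoisedTerm q x y z) := by
  obtain ⟨b, hb, hle⟩ := exists_summable_norm_wellPoisedTerm_mul_pow_le hq hxyz hx hy hz
  exact .of_norm_bounded hb fun n ↦ by simpa using hle 0 n

lemma summable_foldedTerm (hq : ‖q‖ < 1) (hxyz : ‖q * x * y * z‖ < 1)
    (hx : ∀ i : ℕ, q * x * q ^ i ≠ 1) (hy : ∀ i : ℕ, q * y * q ^ i ≠ 1)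
    (hz : ∀ i : ℕ, q * z * q ^ i ≠ 1) : Summable (foldedTerm q x y z) :=
  .of_norm_bounded ((summable_wellPoisedTerm hq hxyz hx hy hz).norm.mul_left 2)
    (norm_foldedTerm_le hq.le)

lemma tendsto_foldedTerm_mul_pow (hq : ‖q‖ < 1) (x y z : ℂ) (n : ℕ) :
    Tendsto (fun N : ℕ ↦ foldedTerm q (x * q ^ N) y z n) atTop (𝓝 (foldedTerm q 0 y z n)) := by
  have hpow : Tendsto (fun N : ℕ ↦ x * q ^ N) atTop (𝓝 0) := by
    simpa using (tendsto_pow_atTop_nhds_zero_of_norm_lt_one hq).const_mul x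
  have hfactor : ContinuousAt (wellPoisedFactor q · n) 0 := by
    unfold wellPoisedFactor
    fun_prop (disch := simp)
  exact ((((hfactor.tendsto.comp hpow).mul_const _).mul_const _).mul_const _).const_mul _

lemma tendsto_tsum_foldedTerm_mul_pow (hq : ‖q‖ < 1) (hxyz : ‖q * x * y * z‖ < 1)
    (hx : ∀ i : ℕ, q * x * q ^ i ≠ 1) (hy : ∀ i : ℕ, q * y * q ^ i ≠ 1)
    (hz : ∀ i : ℕ, q * z * q ^ i ≠ 1) :
    Tendsto (fun N : ℕ ↦ ∑' n, foldedTerm q (x * q ^ N) y z n) atTop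
      (𝓝 (∑' n, foldedTerm q 0 y z n)) := by
  obtain ⟨b, hb, hle⟩ := exists_summable_norm_wellPoisedTerm_mul_pow_le hq hxyz hx hy hz
  refine tendsto_tsum_of_dominated_convergence (hb.mul_left 2)
    (tendsto_foldedTerm_mul_pow hq x y z) (.of_forall fun N n ↦ ?_)
  exact (norm_foldedTerm_le hq.le n).trans (mul_le_mul_of_nonneg_left (hle N n) zero_le_two)

end Convergence

section Evaluation

lemma mul_pow_ne_one_of_norm_lt_one {K : Type*} [NormedField K] {q a : K} (hq : ‖q‖ ≤ 1)
    (ha : ‖a‖ < 1) (i : ℕ) : a * q ^ i ≠ 1 := by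
  refine fun h ↦ ((mul_le_of_le_one_right (norm_nonneg a)
    (pow_le_one₀ (n := i) (norm_nonneg q) hq)).trans_lt ha).ne ?_
  rw [← norm_pow, ← norm_mul, h, norm_one]

lemma norm_mul_mul_pow_mul_mul_lt_one {K : Type*} [NormedField K] {q x y z : K} (hq : ‖q‖ ≤ 1)
    (hxyz : ‖q * x * y * z‖ < 1) (N : ℕ) : ‖q * (x * q ^ N) * y * z‖ < 1 := by
  rw [show q * (x * q ^ N) * y * z = q * x * y * z * q ^ N by ring, norm_mul, norm_pow]
  exact (mul_le_of_le_one_right (norm_nonneg _) (pow_le_one₀ (norm_nonneg q) hq)).trans_lt hxyz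

variable {q x y z : ℂ}

lemma tsum_foldedTerm_mul (hq : ‖q‖ < 1) (hxyz : ‖q * x * y * z‖ < 1)
    (hx : ∀ i : ℕ, q * x * q ^ i ≠ 1) (hy : ∀ i : ℕ, q * y * q ^ i ≠ 1)
    (hz : ∀ i : ℕ, q * z * q ^ i ≠ 1) :
    (1 - q * x) * (1 - q * x * y * z) * ∑' n, foldedTerm q x y z n =
      (1 - q * x * y) * (1 - q * x * z) * ∑' n, foldedTerm q (x * q) y z n := by
  have hxq : ∀ i : ℕ, q * (x * q) * q ^ i ≠ 1 := by
    simpa using mul_mul_pow_mul_pow_ne_one hx 1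
  have hxyzq : ‖q * (x * q) * y * z‖ < 1 := by
    simpa using norm_mul_mul_pow_mul_mul_lt_one hq.le hxyz 1
  have hpow : Tendsto (q ^ · : ℕ → ℂ) atTop (𝓝 0) := tendsto_pow_atTop_nhds_zero_of_norm_lt_one hq
  have hdiff := ((summable_foldedTerm hq hxyz hx hy hz).hasSum.mul_left
    ((1 - q * x) * (1 - q * x * y * z))).sub
      ((summable_foldedTerm hq hxyzq hxq hy hz).hasSum.mul_left ((1 - q * x * y) * (1 - q * x * z)))
  have hpartial := (tendsto_add_atTop_iff_nat 1).2 hdiff.tendsto_sum_nat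
  simp only [sum_range_succ_foldedTerm_sub hx hy hz] at hpartial
  have hzero := ((summable_wellPoisedTerm hq hxyz hx hy hz).tendsto_atTop_zero.const_mul
    (-(q * x * (1 - q * x)))).mul
      (((hpow.const_sub y).mul (hpow.const_sub z)).div ((hpow.const_mul (q * x)).const_sub 1)
        (by simp))
  rw [mul_zero, zero_mul] at hzero
  exact sub_eq_zero.1 (tendsto_nhds_unique hpartial hzero)

lemma qPoch_mul_tsum_foldedTerm (hq : ‖q‖ < 1) (hxyz : ‖q * x * y * z‖ < 1)
    (hx : ∀ i : ℕ, q * x * q ^ i ≠ 1) (hy : ∀ i : ℕ, q * y * q ^ i ≠ 1)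
    (hz : ∀ i : ℕ, q * z * q ^ i ≠ 1) (N : ℕ) :
    qPoch (q * x) q N * qPoch (q * x * y * z) q N * ∑' n, foldedTerm q x y z n =
      qPoch (q * x * y) q N * qPoch (q * x * z) q N *
        ∑' n, foldedTerm q (x * q ^ N) y z n := by
  induction N with
  | zero => simp [qPoch]
  | succ N ih =>
    have hstep := tsum_foldedTerm_mul hq (norm_mul_mul_pow_mul_mul_lt_one hq.le hxyz N)
      (mul_mul_pow_mul_pow_ne_one hx N) hy hz
    simp only [qPoch_succ, pow_succ, ← mul_assoc x]
    linear_combination (1 - q * x * q ^ N) * (1 - q * x * y * z * q ^ N) * ih +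
      qPoch (q * x * y) q N * qPoch (q * x * z) q N * hstep

lemma qPochInf_mul_tsum_foldedTerm (hq : ‖q‖ < 1) (hxyz : ‖q * x * y * z‖ < 1)
    (hx : ∀ i : ℕ, q * x * q ^ i ≠ 1) (hy : ∀ i : ℕ, q * y * q ^ i ≠ 1)
    (hz : ∀ i : ℕ, q * z * q ^ i ≠ 1) :
    qPochInf (q * x) q * qPochInf (q * x * y * z) q * ∑' n, foldedTerm q x y z n =
      qPochInf (q * x * y) q * qPochInf (q * x * z) q * ∑' n, foldedTerm q 0 y z n := by
  have hlim (a : ℂ) := tendsto_qPoch_atTop a hq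
  refine tendsto_nhds_unique (((hlim _).mul (hlim _)).mul_const _) ?_
  simpa only [qPoch_mul_tsum_foldedTerm hq hxyz hx hy hz] using
    ((hlim _).mul (hlim _)).mul (tendsto_tsum_foldedTerm_mul_pow hq hxyz hx hy hz)

lemma qPochInf_mul_tsum_foldedTerm_zero_zero (hq : ‖q‖ < 1) (hz : ∀ i : ℕ, q * z * q ^ i ≠ 1) :
    qPochInf (q * z) q * ∑' n, foldedTerm q 0 0 z n = qPochInf q q := by
  have hone : ∑' n, foldedTerm q 1 0 z n = 1 := by
    rw [tsum_eq_single 0 fun n ↦ foldedTerm_one_of_ne_zero q 0 z]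
    simp [foldedTerm, wellPoisedTerm, wellPoisedFactor]
  have hone_ne (i : ℕ) : q * 1 * q ^ i ≠ 1 := by
    simpa using mul_pow_ne_one_of_norm_lt_one hq.le hq i
  have h := qPochInf_mul_tsum_foldedTerm (y := 0) hq (by simp) hone_ne (by simp) hz
  simp only [hone, mul_zero, zero_mul, qPochInf_zero_left, mul_one, one_mul] at h
  exact h.symm

lemma qPochInf_mul_tsum_foldedTerm_zero (hq : ‖q‖ < 1) (hy : ∀ i : ℕ, q * y * q ^ i ≠ 1)
    (hz : ∀ i : ℕ, q * z * q ^ i ≠ 1) :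
    qPochInf (q * y) q * qPochInf (q * z) q * ∑' n, foldedTerm q 0 y z n =
      qPochInf q q * qPochInf (q * y * z) q := by
  have hlim := qPochInf_mul_tsum_foldedTerm (y := 0) hq (by simp) hy (by simp) hz
  simp only [mul_zero, zero_mul, qPochInf_zero_left, mul_one, one_mul,
    foldedTerm_left_comm q y 0 z] at hlim
  linear_combination qPochInf (q * z) q * hlim +
    qPochInf (q * y * z) q * qPochInf_mul_tsum_foldedTerm_zero_zero hq hz

theorem tsum_foldedTerm (hq : ‖q‖ < 1) (hxyz : ‖q * x * y * z‖ < 1)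
    (hx : ∀ i : ℕ, q * x * q ^ i ≠ 1) (hy : ∀ i : ℕ, q * y * q ^ i ≠ 1)
    (hz : ∀ i : ℕ, q * z * q ^ i ≠ 1) :
    ∑' n, foldedTerm q x y z n =
      qPochInf q q * qPochInf (q * x * y) q * qPochInf (q * x * z) q * qPochInf (q * y * z) q /
        (qPochInf (q * x) q * qPochInf (q * y) q * qPochInf (q * z) q *
          qPochInf (q * x * y * z) q) := by
  have hx_ne := qPochInf_ne_zero hq hx
  have hy_ne := qPochInf_ne_zero hq hy
  have hz_ne := qPochInf_ne_zero hq hz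
  have hxyz_ne := qPochInf_ne_zero hq (mul_pow_ne_one_of_norm_lt_one hq.le hxyz)
  rw [eq_div_iff (by positivity)]
  linear_combination qPochInf (q * y) q * qPochInf (q * z) q *
    qPochInf_mul_tsum_foldedTerm hq hxyz hx hy hz +
    qPochInf (q * x * y) q * qPochInf (q * x * z) q * qPochInf_mul_tsum_foldedTerm_zero hq hy hz

end Evaluation

section Bilateral

lemma mul_pow_ne_one_of_ne_zpow {K : Type*} [Field K] {q a : K} (ha : ∀ m : ℤ, a ≠ q ^ m) (i : ℕ) :
    a * q ^ i ≠ 1 := fun h ↦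
  ha (-i) (by rw [zpow_neg, zpow_natCast]; exact eq_inv_of_mul_eq_one_left h)

lemma div_mul_pow_ne_one_of_ne_zpow {K : Type*} [Field K] {q a : K} (ha : ∀ m : ℤ, a ≠ q ^ m)
    (i : ℕ) : q / a * q ^ i ≠ 1 := fun h ↦ by
  have ha0 : a ≠ 0 := by
    rintro rfl
    simp at h
  refine ha (i + 1 : ℕ) ?_
  rw [zpow_natCast, pow_succ']
  field_simp at h
  exact h.symm

lemma mul_inv_mul_pow_ne_one_of_ne_zpow {K : Type*} [Field K] {q a : K} (ha : ∀ m : ℤ, a ≠ q ^ m)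
    (i : ℕ) : q * a⁻¹ * q ^ i ≠ 1 := by
  simpa only [div_eq_mul_inv] using div_mul_pow_ne_one_of_ne_zpow ha i

variable {q σ ρ γ : ℂ}

lemma norm_mul_inv_mul_inv_mul_inv_lt_one (hconv : ‖q‖ < ‖σ * ρ * γ‖) :
    ‖q * σ⁻¹ * ρ⁻¹ * γ⁻¹‖ < 1 := by
  have hprod : q * σ⁻¹ * ρ⁻¹ * γ⁻¹ = q / (σ * ρ * γ) := by
    simp only [div_eq_mul_inv, mul_inv, mul_assoc]
  rwa [hprod, norm_div, div_lt_one ((norm_nonneg q).trans_lt hconv)]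

/-- The summand of Bailey's bilateral series. -/
noncomputable def baileyTerm (q σ ρ γ : ℂ) (k : ℤ) : ℂ :=
  (q / (σ * ρ * γ)) ^ k * (qPochInt σ q k * qPochInt ρ q k * qPochInt γ q k) /
    (qPochInt (q / σ) q k * qPochInt (q / ρ) q k * qPochInt (q / γ) q k)

lemma baileyTerm_eq_mul_div (q σ ρ γ : ℂ) (k : ℤ) :
    baileyTerm q σ ρ γ k = (q / (σ * ρ * γ)) ^ k * (qPochInt σ q k / qPochInt (q / σ) q k) *
      (qPochInt ρ q k / qPochInt (q / ρ) q k) * (qPochInt γ q k / qPochInt (q / γ) q k) := by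
  rw [baileyTerm]
  ring

lemma qPochInt_div_qPochInt_eq_wellPoisedFactor (hq : ‖q‖ < 1) (hσ0 : σ ≠ 0)
    (hσ : ∀ m : ℤ, σ ≠ q ^ m) (n : ℕ) :
    qPochInt σ q n / qPochInt (q / σ) q n = σ ^ n * wellPoisedFactor q σ⁻¹ n := by
  rw [qPochInt_natCast hq (mul_pow_ne_one_of_ne_zpow hσ),
    qPochInt_natCast hq (div_mul_pow_ne_one_of_ne_zpow hσ), qPoch, qPoch, ← prod_div_distrib,
    wellPoisedFactor, pow_eq_prod_const, ← prod_mul_distrib]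
  refine prod_congr rfl fun i _ ↦ ?_
  rw [← mul_div_assoc, mul_sub, mul_inv_cancel₀ hσ0, div_eq_mul_inv q σ]

lemma baileyTerm_natCast (hq : ‖q‖ < 1) (h0 : σ * ρ * γ ≠ 0) (hσ : ∀ m : ℤ, σ ≠ q ^ m)
    (hρ : ∀ m : ℤ, ρ ≠ q ^ m) (hγ : ∀ m : ℤ, γ ≠ q ^ m) (n : ℕ) :
    baileyTerm q σ ρ γ n = wellPoisedTerm q σ⁻¹ ρ⁻¹ γ⁻¹ n := by
  obtain ⟨⟨hσ0, hρ0⟩, hγ0⟩ : (σ ≠ 0 ∧ ρ ≠ 0) ∧ γ ≠ 0 := by simpa only [mul_ne_zero_iff] using h0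
  rw [baileyTerm_eq_mul_div, qPochInt_div_qPochInt_eq_wellPoisedFactor hq hσ0 hσ,
    qPochInt_div_qPochInt_eq_wellPoisedFactor hq hρ0 hρ,
    qPochInt_div_qPochInt_eq_wellPoisedFactor hq hγ0 hγ, wellPoisedTerm, zpow_natCast, div_pow,
    mul_pow, mul_pow]
  field_simp

lemma baileyTerm_neg_natCast (hq0 : q ≠ 0) (hq : ‖q‖ < 1) (h0 : σ * ρ * γ ≠ 0)
    (hσ : ∀ m : ℤ, σ ≠ q ^ m) (hρ : ∀ m : ℤ, ρ ≠ q ^ m) (hγ : ∀ m : ℤ, γ ≠ q ^ m) (n : ℕ) :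
    baileyTerm q σ ρ γ (-n) = q ^ n * baileyTerm q σ ρ γ n := by
  obtain ⟨⟨hσ0, hρ0⟩, hγ0⟩ : (σ ≠ 0 ∧ ρ ≠ 0) ∧ γ ≠ 0 := by simpa only [mul_ne_zero_iff] using h0
  have hreflect {a : ℂ} (ha0 : a ≠ 0) (ha : ∀ m : ℤ, a ≠ q ^ m) :=
    qPochInt_neg_div_qPochInt_neg hq0 hq ha0 (mul_pow_ne_one_of_ne_zpow ha)
      (div_mul_pow_ne_one_of_ne_zpow ha) n
  rw [baileyTerm_eq_mul_div, baileyTerm_eq_mul_div, hreflect hσ0 hσ, hreflect hρ0 hρ,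
    hreflect hγ0 hγ, zpow_neg, zpow_natCast]
  generalize qPochInt σ q n / qPochInt (q / σ) q n = A,
    qPochInt ρ q n / qPochInt (q / ρ) q n = B, qPochInt γ q n / qPochInt (q / γ) q n = C
  simp only [div_pow, mul_pow, pow_right_comm _ 2 n]
  field_simp

lemma hasSum_baileyTerm (hq0 : q ≠ 0) (hq : ‖q‖ < 1) (hconv : ‖q‖ < ‖σ * ρ * γ‖)
    (hσ : ∀ m : ℤ, σ ≠ q ^ m) (hρ : ∀ m : ℤ, ρ ≠ q ^ m) (hγ : ∀ m : ℤ, γ ≠ q ^ m) :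
    HasSum (baileyTerm q σ ρ γ) (∑' n, foldedTerm q σ⁻¹ ρ⁻¹ γ⁻¹ n) := by
  have h0 : σ * ρ * γ ≠ 0 := norm_pos_iff.1 ((norm_nonneg q).trans_lt hconv)
  have hxyz := norm_mul_inv_mul_inv_mul_inv_lt_one hconv
  have hx := mul_inv_mul_pow_ne_one_of_ne_zpow hσ
  have hy := mul_inv_mul_pow_ne_one_of_ne_zpow hρ
  have hz := mul_inv_mul_pow_ne_one_of_ne_zpow hγ
  have hterm := (summable_wellPoisedTerm hq hxyz hx hy hz).hasSum
  have hfold := (summable_foldedTerm hq hxyz hx hy hz).hasSum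
  have hnonneg : HasSum (fun n : ℕ ↦ baileyTerm q σ ρ γ n)
      (∑' n, wellPoisedTerm q σ⁻¹ ρ⁻¹ γ⁻¹ n) := by
    simpa only [baileyTerm_natCast hq h0 hσ hρ hγ] using hterm
  have hneg : HasSum (fun n : ℕ ↦ baileyTerm q σ ρ γ (-(n + 1)))
      (∑' n, foldedTerm q σ⁻¹ ρ⁻¹ γ⁻¹ n - ∑' n, wellPoisedTerm q σ⁻¹ ρ⁻¹ γ⁻¹ n) := by
    have hterm_neg (n : ℕ) : baileyTerm q σ ρ γ (-(n + 1)) =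
        foldedTerm q σ⁻¹ ρ⁻¹ γ⁻¹ (n + 1) - wellPoisedTerm q σ⁻¹ ρ⁻¹ γ⁻¹ (n + 1) := by
      rw [← Nat.cast_add_one, baileyTerm_neg_natCast hq0 hq h0 hσ hρ hγ,
        baileyTerm_natCast hq h0 hσ hρ hγ, foldedTerm_succ]
      ring
    simpa only [hterm_neg, sum_range_one, foldedTerm_zero, sub_self, sub_zero] using
      (hasSum_nat_add_iff' 1).2 (hfold.sub hterm)
  simpa only [add_sub_cancel] using hnonneg.of_nat_of_neg_add_one hneg

end Bilateral

theorem baileys_3psi3_general {q σ ρ γ : ℂ} (hq0 : 0 < ‖q‖) (hq1 : ‖q‖ < 1)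
    (hconv : ‖q‖ < ‖σ * ρ * γ‖) (hσ : ∀ m : ℤ, σ ≠ q ^ m) (hρ : ∀ m : ℤ, ρ ≠ q ^ m)
    (hγ : ∀ m : ℤ, γ ≠ q ^ m) :
    HasSum (baileyTerm q σ ρ γ)
      (qPochInf q q * qPochInf (q / (σ * ρ)) q * qPochInf (q / (σ * γ)) q *
          qPochInf (q / (ρ * γ)) q /
        (qPochInf (q / σ) q * qPochInf (q / ρ) q * qPochInf (q / γ) q *
          qPochInf (q / (σ * ρ * γ)) q)) := by
  have hsum := hasSum_baileyTerm (norm_pos_iff.1 hq0) hq1 hconv hσ hρ hγ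
  rw [tsum_foldedTerm hq1 (norm_mul_inv_mul_inv_mul_inv_lt_one hconv)
    (mul_inv_mul_pow_ne_one_of_ne_zpow hσ) (mul_inv_mul_pow_ne_one_of_ne_zpow hρ)
    (mul_inv_mul_pow_ne_one_of_ne_zpow hγ)] at hsum
  simpa only [div_eq_mul_inv _ (_ * _), div_eq_mul_inv q, mul_inv, ← mul_assoc] using hsum

/-- Bailey's `₃ψ₃` bilateral summation formula. -/
theorem baileys_3psi3 (q σ ρ γ : ℂ)
    (hq0 : 0 < ‖q‖) (hq1 : ‖q‖ < 1)
    (hconv : ‖q‖ < ‖σ * ρ * γ‖)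
    (h : ∀ m : ℤ, σ ≠ q ^ m ∧ ρ ≠ q ^ m ∧ γ ≠ q ^ m ∧ σ * ρ * γ ≠ q ^ m) :
    Summable (fun k : ℤ => (q / (σ * ρ * γ)) ^ k *
        (qPochInt σ q k * qPochInt ρ q k * qPochInt γ q k) /
        (qPochInt (q / σ) q k * qPochInt (q / ρ) q k * qPochInt (q / γ) q k)) ∧
    ∑' k : ℤ, (q / (σ * ρ * γ)) ^ k *
        (qPochInt σ q k * qPochInt ρ q k * qPochInt γ q k) /
        (qPochInt (q / σ) q k * qPochInt (q / ρ) q k * qPochInt (q / γ) q k)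
    = qPochInf q q * qPochInf (q / (σ * ρ)) q * qPochInf (q / (σ * γ)) q *
        qPochInf (q / (ρ * γ)) q /
      (qPochInf (q / σ) q * qPochInf (q / ρ) q * qPochInf (q / γ) q *
        qPochInf (q / (σ * ρ * γ)) q) := by
  have key := baileys_3psi3_general hq0 hq1 hconv (fun m ↦ (h m).1) (fun m ↦ (h m).2.1)
    (fun m ↦ (h m).2.2.1)
  exact ⟨key.summable, key.tsum_eq⟩
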